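/- Let 1/2 < γ ≤ 1, let A : ℝ³ → ℝ³⊗ℝ³ be a matrix-valued field, let n ≥ 0 be an integer with ‖∇^{n+1}A‖ < ∞, and let Y ∈ 𝒞^γ be a closed γ-Hölder curve. Then the velocity field V^Y(x) := ∫_0^1 A(x − Y_η) dY_η (Young integral) satisfies ‖∇^n V^Y‖ ≤ C_γ ‖∇^{n+1} A‖ ‖Y‖_γ², where C_γ ≥ 1 is the constant from the Young integral estimate, depending only on γ. -/

import Mathlib

/-!
Evaluate every integral along dyadic partitions. Passing from one dyadic partition of `[a, b]` to
the next splits `2 ^ k` intervals at their midpoints; for `γ`-Hölder integrand and integrator the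
total change of the Riemann sum is at most `L (b - a) ^ (2γ) (2 ^ (1 - 2γ)) ^ k` (`dySum_dist`).
As `2γ > 1`, summing the geometric series gives the Young estimate with constant
`C = 1 / (1 - 2 ^ (1 - 2γ))` (`norm_sub_le_of_dySum_tendsto`, `youngEstimate_dyRatio`).

When `∇A` is bounded by `M`, the path `A(x - Y)` is `γ`-Hölder with constant `M ‖Y‖_γ`, and the
first-order term `A(x - Y_0)(Y_1 - Y_0)` vanishes because `Y` is closed; this is the case `n = 0`.
For larger `n`, the dyadic approximations of the velocity field of a `C¹` field converge uniformly
on balls (`exists_dyVel_limit`), so limit and derivative may be exchanged: the derivative of the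
velocity field of `A` is the velocity field of `derivField A`, whose values are linear maps into a
larger space. Since `derivField` shifts the norms of the iterated derivatives by one, induction on
`n` with the target space left arbitrary gives the theorem (`velocity_regular`).
-/


/- Common framework: Hölder curves on [0,1], Riemann–Stieltjes/Young/rough integrals as
limits of (compensated) partition sums, controlled paths, and covariations. -/

noncomputable section

open Set Filter Topology MeasureTheory
open scoped ENNReal

/-- Three dimensional Euclidean space. -/
abbrev E3 : Type := EuclideanSpace ℝ (Fin 3)

/-- `ℝ³ ⊗ ℝ³`, realized as (continuous) linear endomorphisms of `ℝ³`. -/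
abbrev M3 : Type := E3 →L[ℝ] E3

/-- Outer (tensor) product `a ⊗ b` of two vectors, as the linear map `v ↦ ⟪b, v⟫ • a`. -/
def oProd (a b : E3) : M3 := (innerSL ℝ b).smulRight a

/-- The canonical basis vectors of `ℝ³`. -/
def e3 (k : Fin 3) : E3 := EuclideanSpace.single k 1

/-- The `i`-th component of a vector of `ℝ³`. -/
def ecomp (i : Fin 3) (v : E3) : ℝ := @inner ℝ _ _ (e3 i) v

/-- The `(i,k)` entry of a matrix. -/
def mentry (i k : Fin 3) (M : M3) : ℝ := ecomp i (M (e3 k))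

/-- `γ`-Hölder seminorm `‖X‖_γ` over the interval `[0,1]`. -/
def hSemi {F : Type*} [NormedAddCommGroup F] (γ : ℝ) (X : ℝ → F) : ℝ :=
  sSup {r | ∃ s ∈ Icc (0:ℝ) 1, ∃ t ∈ Icc (0:ℝ) 1, s ≠ t ∧ r = ‖X s - X t‖ / |s - t| ^ γ}

/-- Supremum norm `‖X‖_∞` over the interval `[0,1]`. -/
def sNorm {F : Type*} [NormedAddCommGroup F] (X : ℝ → F) : ℝ :=
  sSup {r | ∃ s ∈ Icc (0:ℝ) 1, r = ‖X s‖}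

/-- The norm `‖X‖_γ^* = ‖X‖_∞ + ‖X‖_γ`. -/
def hStar {F : Type*} [NormedAddCommGroup F] (γ : ℝ) (X : ℝ → F) : ℝ :=
  sNorm X + hSemi γ X

/-- `X` is `γ`-Hölder continuous on `[0,1]`. -/
def HolderOn {F : Type*} [NormedAddCommGroup F] (γ : ℝ) (X : ℝ → F) : Prop :=
  ∃ C : ℝ, ∀ s ∈ Icc (0:ℝ) 1, ∀ t ∈ Icc (0:ℝ) 1, ‖X s - X t‖ ≤ C * |s - t| ^ γ

/-- A closed continuous curve parametrized by `[0,1]`. -/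
def ClosedCurve {F : Type*} [NormedAddCommGroup F] (X : ℝ → F) : Prop :=
  ContinuousOn X (Icc (0:ℝ) 1) ∧ X 0 = X 1

/-- Membership in `𝒞^γ`: closed curve with finite `γ`-Hölder norm. -/
def MemC {F : Type*} [NormedAddCommGroup F] (γ : ℝ) (X : ℝ → F) : Prop :=
  ClosedCurve X ∧ HolderOn γ X

/-- A partition `a = t 0 ≤ t 1 ≤ ⋯ ≤ t n = b` of the interval `[a,b]`. -/
structure Ptn (a b : ℝ) where
  n : ℕ
  t : ℕ → ℝ
  first : t 0 = a
  last : t n = b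
  mono : ∀ i < n, t i ≤ t (i + 1)

/-- The mesh of the partition is at most `δ`. -/
def Ptn.MeshLE {a b : ℝ} (P : Ptn a b) (δ : ℝ) : Prop :=
  ∀ i < P.n, P.t (i + 1) - P.t i ≤ δ

/-- `I` is the limit of the partition sums `S P` as the mesh of `P` tends to zero. -/
def RSLimit {F : Type*} [NormedAddCommGroup F] (a b : ℝ) (S : Ptn a b → F) (I : F) : Prop :=
  ∀ ε > 0, ∃ δ > 0, ∀ P : Ptn a b, P.MeshLE δ → ‖S P - I‖ ≤ ε

/-- `‖∇^j φ‖ = sup_x ‖∇^j φ(x)‖`. -/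
def tnorm {F : Type*} [NormedAddCommGroup F] [NormedSpace ℝ F] (j : ℕ) (φ : E3 → F) : ℝ :=
  sSup (Set.range fun x => ‖iteratedFDeriv ℝ j φ x‖)

/-- `‖∇^m φ‖_n = Σ_{k=0}^n ‖∇^{m+k} φ‖`. -/
def nablaNorm {F : Type*} [NormedAddCommGroup F] [NormedSpace ℝ F]
    (m n : ℕ) (φ : E3 → F) : ℝ :=
  ∑ k ∈ Finset.range (n + 1), tnorm (m + k) φ

/-- `‖∇^m φ‖_n < ∞` : `φ` is `(m+n)` times continuously differentiable with
`sup_x ‖∇^k φ(x)‖ < ∞` for every `m ≤ k ≤ m+n`. -/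
def NablaBdd {F : Type*} [NormedAddCommGroup F] [NormedSpace ℝ F] (m n : ℕ) (φ : E3 → F) : Prop :=
  ContDiff ℝ (m + n) φ ∧
    ∀ k : ℕ, m ≤ k → k ≤ m + n → BddAbove (Set.range fun x => ‖iteratedFDeriv ℝ k φ x‖)

/-- Riemann–Stieltjes sum for the line integral `∫_0^1 A(x - Z_η) dZ_η`. -/
def youngRS (A : E3 → M3) (Z : ℝ → E3) (x : E3) {a b : ℝ} (P : Ptn a b) : E3 :=
  ∑ i ∈ Finset.range P.n, A (x - Z (P.t i)) (Z (P.t (i + 1)) - Z (P.t i))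

/-- `V = V^Z` is the Young velocity field `V^Z(x) = ∫_0^1 A(x - Z_η) dZ_η`, each value being
the limit of Riemann–Stieltjes sums. -/
def IsYoungVelocity (A : E3 → M3) (Z : ℝ → E3) (V : E3 → E3) : Prop :=
  ∀ x : E3, RSLimit 0 1 (fun P => youngRS A Z x P) (V x)

/-- `C` is a constant realizing the Young estimate
`|∫_η^ξ (X_ρ - X_η) ⊗ dY_ρ| ≤ C ‖X‖_γ ‖Y‖_γ |ξ - η|^{2γ}`. -/
def YoungEstimate (γ C : ℝ) : Prop :=
  ∀ X Y : ℝ → E3, HolderOn γ X → HolderOn γ Y →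
    ∀ η ∈ Icc (0:ℝ) 1, ∀ ξ ∈ Icc (0:ℝ) 1, η ≤ ξ →
      ∀ I : M3,
        RSLimit η ξ (fun P => ∑ i ∈ Finset.range P.n,
          oProd (X (P.t i) - X η) (Y (P.t (i + 1)) - Y (P.t i))) I →
        ‖I‖ ≤ C * hSemi γ X * hSemi γ Y * (ξ - η) ^ (2 * γ)

/-- Continuity of `t ↦ Y(t)` from `[0,T]` into `𝒞^γ` (with the norm `‖·‖_γ^*`). -/
def ContXT (γ T : ℝ) (Y : ℝ → ℝ → E3) : Prop :=
  ∀ t ∈ Icc 0 T, ∀ ε > 0, ∃ δ > 0, ∀ s ∈ Icc 0 T, |s - t| ≤ δ →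
    hStar γ (fun ξ => Y s ξ - Y t ξ) ≤ ε

/-- The norm `‖Y‖_{𝐗_T} = sup_{t ∈ [0,T]} ‖Y(t)‖_γ^*`. -/
def xnorm (γ T : ℝ) (Y : ℝ → ℝ → E3) : ℝ :=
  sSup {r | ∃ t ∈ Icc 0 T, r = hStar γ (Y t)}

/-- Membership in `𝐗_T = C([0,T], 𝒞^γ)`. -/
def MemXT (γ T : ℝ) (Y : ℝ → ℝ → E3) : Prop :=
  (∀ t ∈ Icc 0 T, MemC γ (Y t)) ∧ ContXT γ T Y

/-- The map `F(Y)(t)_ξ = X_ξ + ∫_0^t v_s(Y(s)_ξ) ds`. -/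
def Fmap (X : ℝ → E3) (v : ℝ → E3 → E3) (Y : ℝ → ℝ → E3) : ℝ → ℝ → E3 :=
  fun t ξ => X ξ + ∫ s in (0:ℝ)..t, v s (Y s ξ)

/-- The controlled derivative of `F(Y)`:
`F(Y)'(t)_ξ = Id + ∫_0^t ∇v_s(Y(s)_ξ) ∘ Y'(s)_ξ ds`. -/
def Fmap' (v : ℝ → E3 → E3) (Y : ℝ → ℝ → E3) (Y' : ℝ → ℝ → M3) : ℝ → ℝ → M3 :=
  fun t ξ => ContinuousLinearMap.id ℝ E3
    + ∫ s in (0:ℝ)..t, (fderiv ℝ (v s) (Y s ξ)).comp (Y' s ξ)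

/-- `Y` solves the vortex filament equation on `[0,T]` with initial condition `X`,
the velocity fields being given by Young line integrals. -/
def IsYoungSolution (T : ℝ) (A : E3 → M3) (X : ℝ → E3) (Y : ℝ → ℝ → E3) : Prop :=
  ∃ v : ℝ → E3 → E3, (∀ s ∈ Icc 0 T, IsYoungVelocity A (Y s) (v s)) ∧
    ∀ t ∈ Icc 0 T, ∀ ξ ∈ Icc (0:ℝ) 1, Y t ξ = X ξ + ∫ s in (0:ℝ)..t, v s (Y s ξ)

/-- The same, on the half open interval `[0,T)`. -/
def IsYoungSolutionLt (T : ℝ) (A : E3 → M3) (X : ℝ → E3) (Y : ℝ → ℝ → E3) : Prop :=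
  ∃ v : ℝ → E3 → E3, (∀ s ∈ Ico 0 T, IsYoungVelocity A (Y s) (v s)) ∧
    ∀ t ∈ Ico 0 T, ∀ ξ ∈ Icc (0:ℝ) 1, Y t ξ = X ξ + ∫ s in (0:ℝ)..t, v s (Y s ξ)

/-- `β`-Hölder norm of a two-parameter function on `[0,1]²` (vanishing on the diagonal). -/
def rnorm {F : Type*} [NormedAddCommGroup F] (β : ℝ) (W : ℝ → ℝ → F) : ℝ :=
  sSup {r | ∃ s ∈ Icc (0:ℝ) 1, ∃ t ∈ Icc (0:ℝ) 1, s ≠ t ∧ r = ‖W s t‖ / |s - t| ^ β}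

/-- Finiteness of the `β`-Hölder norm of a two-parameter function. -/
def RBddOn {F : Type*} [NormedAddCommGroup F] (β : ℝ) (W : ℝ → ℝ → F) : Prop :=
  ∃ C : ℝ, ∀ s ∈ Icc (0:ℝ) 1, ∀ t ∈ Icc (0:ℝ) 1, ‖W s t‖ ≤ C * |s - t| ^ β

/-- `(X, 𝕏²)` is a `γ`-rough path: `X` is `γ`-Hölder, the area process `𝕏²` is continuous,
satisfies the compatibility (Chen) relation and has finite `2γ`-Hölder norm. -/
structure IsRoughPath (γ : ℝ) (X : ℝ → E3) (XX : ℝ → ℝ → M3) : Prop where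
  cont : ContinuousOn X (Icc (0:ℝ) 1)
  holder : HolderOn γ X
  cont2 : ContinuousOn (fun p : ℝ × ℝ => XX p.1 p.2) (Icc (0:ℝ) 1 ×ˢ Icc (0:ℝ) 1)
  chen : ∀ ξ ∈ Icc (0:ℝ) 1, ∀ η ∈ Icc (0:ℝ) 1, ∀ ρ ∈ Icc (0:ℝ) 1,
    XX ξ ρ - XX ξ η - XX η ρ = oProd (X ξ - X η) (X η - X ρ)
  bdd : RBddOn (2 * γ) XX

/-- Remainder `R^Y_{ηξ} = Y_ξ - Y_η - Y'_η (X_ξ - X_η)` of a controlled path. -/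
def ctrlRem (X Y : ℝ → E3) (Y' : ℝ → M3) (η ξ : ℝ) : E3 :=
  Y ξ - Y η - Y' η (X ξ - X η)

/-- `(Y, Y')` is a (closed) path weakly controlled by `X`, i.e. `Y ∈ 𝒟_X`. -/
structure IsControlled (γ : ℝ) (X Y : ℝ → E3) (Y' : ℝ → M3) : Prop where
  closed : Y 0 = Y 1
  cont : ContinuousOn Y (Icc (0:ℝ) 1)
  contD : ContinuousOn Y' (Icc (0:ℝ) 1)
  holderD : HolderOn γ Y'
  rem : RBddOn (2 * γ) (fun η ξ => ctrlRem X Y Y' η ξ)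

/-- The norm `‖Y‖_D = ‖Y'‖_γ + ‖R^Y‖_{2γ} + ‖Y'‖_∞` on `𝒟_X`. -/
def dnorm (γ : ℝ) (X Y : ℝ → E3) (Y' : ℝ → M3) : ℝ :=
  hSemi γ Y' + rnorm (2 * γ) (fun η ξ => ctrlRem X Y Y' η ξ) + sNorm Y'

/-- The norm `‖Y‖_D^* = ‖Y‖_D + ‖Y‖_∞`. -/
def dnormStar (γ : ℝ) (X Y : ℝ → E3) (Y' : ℝ → M3) : ℝ :=
  dnorm γ X Y Y' + sNorm Y

/-- The constant `C_X = 1 + ‖X‖_γ + ‖𝕏²‖_{2γ}`. -/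
def CXconst (γ : ℝ) (X : ℝ → E3) (XX : ℝ → ℝ → M3) : ℝ :=
  1 + hSemi γ X + rnorm (2 * γ) XX

/-- The compensator `P W Qᵀ` (matrix product), i.e. `(P W Qᵀ)^{ij} = P^{ik} W^{kl} Q^{jl}`. -/
def ctrlComp (P Q W : M3) : M3 := P ∘L W ∘L (ContinuousLinearMap.adjoint Q)

/-- Compensated Riemann sum
`Σ_i [ Y_{t_i} ⊗ (Z_{t_{i+1}} - Z_{t_i}) + Y'_{t_i} Z'_{t_i} 𝕏²_{t_{i+1} t_i} ]`
for the rough integral `∫ Y ⊗ dZ` of two weakly controlled paths. -/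
def roughPairRS (XX : ℝ → ℝ → M3) (Y Z : ℝ → E3) (Y' Z' : ℝ → M3)
    {a b : ℝ} (P : Ptn a b) : M3 :=
  ∑ i ∈ Finset.range P.n,
    (oProd (Y (P.t i)) (Z (P.t (i + 1)) - Z (P.t i))
      + ctrlComp (Y' (P.t i)) (Z' (P.t i)) (XX (P.t (i + 1)) (P.t i)))

/-- The contraction `Σ_{k,l} W^{kl} (W'(e_k))(Z'(e_l))`, the compensator of a matrix-valued
controlled integrand `W` (with controlled derivative `W'`) against `dZ`. -/
def comp2 (W' : E3 →L[ℝ] M3) (Z' : M3) (W : M3) : E3 :=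
  ∑ k : Fin 3, ∑ l : Fin 3, ecomp k (W (e3 l)) • (W' (e3 k)) (Z' (e3 l))

/-- Compensated Riemann sum for the rough line integral `∫_0^1 A(x - Z_η) dZ_η` along a path
`Z` weakly controlled by `X`, the integrand `η ↦ A(x - Z_η)` having controlled derivative
`-∇A(x - Z_η) ∘ Z'_η`. -/
def roughVelRS (A : E3 → M3) (XX : ℝ → ℝ → M3) (Z : ℝ → E3) (Z' : ℝ → M3)
    (x : E3) {a b : ℝ} (P : Ptn a b) : E3 :=
  ∑ i ∈ Finset.range P.n,
    (A (x - Z (P.t i)) (Z (P.t (i + 1)) - Z (P.t i))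
      + comp2 (-((fderiv ℝ A (x - Z (P.t i))).comp (Z' (P.t i)))) (Z' (P.t i))
          (XX (P.t (i + 1)) (P.t i)))

/-- `V = V^Z` is the rough velocity field `V^Z(x) = ∫_0^1 A(x - Z_η) dZ_η`, each value being
the limit of compensated Riemann sums. -/
def IsRoughVelocity (A : E3 → M3) (XX : ℝ → ℝ → M3) (Z : ℝ → E3) (Z' : ℝ → M3)
    (V : E3 → E3) : Prop :=
  ∀ x : E3, RSLimit 0 1 (fun P => roughVelRS A XX Z Z' x P) (V x)

/-- Continuity of `t ↦ (Y(t), Y'(t))` from `[0,T]` into `𝒟_X` (with the norm `‖·‖_D^*`). -/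
def ContDT (γ T : ℝ) (X : ℝ → E3) (Y : ℝ → ℝ → E3) (Y' : ℝ → ℝ → M3) : Prop :=
  ∀ t ∈ Icc 0 T, ∀ ε > 0, ∃ δ > 0, ∀ s ∈ Icc 0 T, |s - t| ≤ δ →
    dnormStar γ X (fun ξ => Y s ξ - Y t ξ) (fun ξ => Y' s ξ - Y' t ξ) ≤ ε

/-- Membership in `𝐃_{X,T} = C([0,T], 𝒟_X)`. -/
def MemDT (γ T : ℝ) (X : ℝ → E3) (Y : ℝ → ℝ → E3) (Y' : ℝ → ℝ → M3) : Prop :=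
  (∀ t ∈ Icc 0 T, IsControlled γ X (Y t) (Y' t)) ∧ ContDT γ T X Y Y'

/-- The norm `‖Y‖_{𝐃_{X,T}} = sup_{t ∈ [0,T]} ‖Y(t)‖_D^*`. -/
def dxnorm (γ T : ℝ) (X : ℝ → E3) (Y : ℝ → ℝ → E3) (Y' : ℝ → ℝ → M3) : ℝ :=
  sSup {r | ∃ t ∈ Icc 0 T, r = dnormStar γ X (Y t) (Y' t)}

/-- `(Y, Y')` solves the vortex filament equation on `[0,T]` with initial condition `X`,
the velocity fields being given by rough line integrals over the rough path `(X, 𝕏²)`. -/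
def IsRoughSolution (T : ℝ) (A : E3 → M3) (X : ℝ → E3) (XX : ℝ → ℝ → M3)
    (Y : ℝ → ℝ → E3) (Y' : ℝ → ℝ → M3) : Prop :=
  ∃ v : ℝ → E3 → E3,
    (∀ s ∈ Icc 0 T, IsRoughVelocity A XX (Y s) (Y' s) (v s)) ∧
    (∀ t ∈ Icc 0 T, ∀ ξ ∈ Icc (0:ℝ) 1, Y t ξ = X ξ + ∫ s in (0:ℝ)..t, v s (Y s ξ)) ∧
    (∀ t ∈ Icc 0 T, ∀ ξ ∈ Icc (0:ℝ) 1, Y' t ξ = Fmap' v Y Y' t ξ)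

/-- `YY` is the lift (area process) `𝕐²_{ab} = ∫_a^b (Y_η - Y_a) ⊗ dY_η` of the weakly
controlled path `(Y, Y')`, defined through compensated Riemann sums. -/
def IsLift (XX : ℝ → ℝ → M3) (Y : ℝ → E3) (Y' : ℝ → M3) (YY : ℝ → ℝ → M3) : Prop :=
  ∀ a ∈ Icc (0:ℝ) 1, ∀ b ∈ Icc (0:ℝ) 1, a ≤ b →
    RSLimit a b (fun P => ∑ i ∈ Finset.range P.n,
      (oProd (Y (P.t i) - Y a) (Y (P.t (i + 1)) - Y (P.t i))
        + ctrlComp (Y' (P.t i)) (Y' (P.t i)) (XX (P.t (i + 1)) (P.t i)))) (YY a b)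

/-- `ε`-approximation `ξ ↦ ∫_0^ξ (U_{ρ+ε} - U_ρ)(W_{ρ+ε} - W_ρ) dρ / ε` of the covariation
(the processes being extended by their value at `1`). -/
def covApprox (U W : ℝ → ℝ) (ε ξ : ℝ) : ℝ :=
  ∫ ρ in (0:ℝ)..ξ, (U (min (ρ + ε) 1) - U ρ) * (W (min (ρ + ε) 1) - W ρ) / ε

/-- `C = [U, W]` is the covariation of the processes `U` and `W`: the `ε`-approximations
converge uniformly in probability (ucp) as `ε → 0⁺`. -/
def HasCovariation {Ω : Type*} [MeasurableSpace Ω] (P : Measure Ω)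
    (U W : Ω → ℝ → ℝ) (C : Ω → ℝ → ℝ) : Prop :=
  ∀ δ : ℝ, 0 < δ →
    Tendsto (fun ε : ℝ =>
        P {ω | δ ≤ ⨆ ξ : Icc (0:ℝ) 1, |covApprox (U ω) (W ω) ε ξ.1 - C ω ξ.1|})
      (𝓝[>] (0:ℝ)) (𝓝 (0:ℝ≥0∞))

/-! ### Dyadic sums -/

/-- The dyadic points `a + i (b - a) / 2 ^ k`, `0 ≤ i ≤ 2 ^ k`, of the interval `[a, b]`. -/
def dyPt (a b : ℝ) (k i : ℕ) : ℝ := a + i * ((b - a) / 2 ^ k)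

/-- The partition of `[a, b]` into `2 ^ k` intervals of equal length. -/
def dyPtn (a b : ℝ) (hab : a ≤ b) (k : ℕ) : Ptn a b where
  n := 2 ^ k
  t := dyPt a b k
  first := by simp [dyPt]
  last := by simp only [dyPt]; push_cast; field_simp; ring
  mono := by
    intro i _
    have : 0 ≤ (b - a) / 2 ^ k := div_nonneg (sub_nonneg.2 hab) (by positivity)
    simp only [dyPt]; push_cast; nlinarith

/-- The sum of the increments `Ξ s t` over the `k`-th dyadic partition of `[a, b]`. -/
def dySum {G : Type*} [NormedAddCommGroup G] (Ξ : ℝ → ℝ → G) (a b : ℝ) (k : ℕ) : G :=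
  ∑ i ∈ Finset.range (2 ^ k), Ξ (dyPt a b k i) (dyPt a b k (i + 1))

lemma dyPt_succ_sub (a b : ℝ) (k i : ℕ) :
    dyPt a b k (i + 1) - dyPt a b k i = (b - a) / 2 ^ k := by
  simp only [dyPt]; push_cast; ring

lemma dyPt_even (a b : ℝ) (k i : ℕ) : dyPt a b (k + 1) (2 * i) = dyPt a b k i := by
  simp only [dyPt]; push_cast; rw [pow_succ]; field_simp

lemma dyPt_odd (a b : ℝ) (k i : ℕ) :
    dyPt a b (k + 1) (2 * i + 1) = (dyPt a b k i + dyPt a b k (i + 1)) / 2 := by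
  simp only [dyPt]; push_cast; rw [pow_succ]; field_simp; ring

lemma dyPt_mem {a b : ℝ} (hab : a ≤ b) {k i : ℕ} (hi : i ≤ 2 ^ k) :
    dyPt a b k i ∈ Icc a b := by
  have h2 : (0 : ℝ) < 2 ^ k := by positivity
  have h0 : 0 ≤ b - a := sub_nonneg.2 hab
  have hi' : (i : ℝ) ≤ 2 ^ k := by exact_mod_cast hi
  have h3 : (i : ℝ) * ((b - a) / 2 ^ k) ≤ b - a := by
    rw [← mul_div_assoc, div_le_iff₀ h2]; nlinarith
  have h4 : 0 ≤ (i : ℝ) * ((b - a) / 2 ^ k) := by positivity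
  simp only [dyPt]; constructor <;> linarith

/-- A limit over partitions of vanishing mesh is in particular a limit along dyadic partitions. -/
lemma RSLimit.tendsto_dyPtn {G : Type*} [NormedAddCommGroup G] {a b : ℝ} (hab : a ≤ b)
    {S : Ptn a b → G} {I : G} (h : RSLimit a b S I) :
    Tendsto (fun k => S (dyPtn a b hab k)) atTop (𝓝 I) := by
  rw [Metric.tendsto_atTop]
  intro ε hε
  obtain ⟨δ, hδ, hS⟩ := h (ε / 2) (half_pos hε)
  have hlim : Tendsto (fun k : ℕ => (b - a) * (1 / 2 : ℝ) ^ k) atTop (𝓝 ((b - a) * 0)) :=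
    (tendsto_pow_atTop_nhds_zero_of_lt_one (by norm_num) (by norm_num)).const_mul _
  rw [mul_zero] at hlim
  obtain ⟨N, hN⟩ := eventually_atTop.1 (hlim.eventually (gt_mem_nhds hδ))
  refine ⟨N, fun k hk => ?_⟩
  have := hS (dyPtn a b hab k) (fun i _ => by
    change dyPt a b k (i + 1) - dyPt a b k i ≤ δ
    rw [dyPt_succ_sub]
    have := hN k hk
    rw [one_div, inv_pow, ← div_eq_mul_inv] at this
    exact this.le)
  rw [dist_eq_norm]
  linarith

/-- The ratio `2 ^ (1 - 2γ)` of consecutive dyadic corrections. -/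
def dyRatio (γ : ℝ) : ℝ := 2 ^ (1 - 2 * γ)

lemma dyRatio_pos (γ : ℝ) : 0 < dyRatio γ := Real.rpow_pos_of_pos (by norm_num) _

lemma dyRatio_lt_one {γ : ℝ} (hγ : 1 / 2 < γ) : dyRatio γ < 1 :=
  Real.rpow_lt_one_of_one_lt_of_neg (by norm_num) (by linarith)

/-- Refining the dyadic partition splits each interval at its midpoint; each of the `2 ^ k` splits
costs at most `L ((b - a) / 2 ^ k) ^ (2γ)`, and the total decays geometrically. -/
lemma dySum_dist {G : Type*} [NormedAddCommGroup G] {γ a b L : ℝ} (hab : a ≤ b)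
    {Ξ : ℝ → ℝ → G}
    (hΞ : ∀ s ∈ Icc a b, ∀ t ∈ Icc a b, s ≤ t →
      ‖Ξ s t - (Ξ s ((s + t) / 2) + Ξ ((s + t) / 2) t)‖ ≤ L * (t - s) ^ (2 * γ)) (k : ℕ) :
    dist (dySum Ξ a b k) (dySum Ξ a b (k + 1)) ≤ L * (b - a) ^ (2 * γ) * dyRatio γ ^ k := by
  have hsplit : ∀ (f : ℕ → G) (m : ℕ), ∑ i ∈ Finset.range (2 * m), f i
      = ∑ i ∈ Finset.range m, (f (2 * i) + f (2 * i + 1)) := by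
    intro f m
    induction m with
    | zero => simp
    | succ m ih =>
      rw [Finset.sum_range_succ, ← ih, show 2 * (m + 1) = 2 * m + 1 + 1 by ring,
        Finset.sum_range_succ, Finset.sum_range_succ, add_assoc]
  have h0 : 0 ≤ b - a := sub_nonneg.2 hab
  have hdec : dist (dySum Ξ a b k) (dySum Ξ a b (k + 1)) ≤
      ∑ _i ∈ Finset.range (2 ^ k), L * ((b - a) / 2 ^ k) ^ (2 * γ) := by
    rw [dist_eq_norm]
    unfold dySum
    rw [pow_succ' 2 k, hsplit, ← Finset.sum_sub_distrib]
    refine norm_sum_le_of_le _ fun i hi => ?_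
    have hi' := Finset.mem_range.1 hi
    have e : dyPt a b (k + 1) (2 * i + 1 + 1) = dyPt a b k (i + 1) := by
      rw [← dyPt_even a b k (i + 1)]; rfl
    rw [e, dyPt_even, dyPt_odd, ← dyPt_succ_sub a b k i]
    refine hΞ _ (dyPt_mem hab hi'.le) _ (dyPt_mem hab hi') ?_
    have := dyPt_succ_sub a b k i
    have : 0 ≤ (b - a) / 2 ^ k := by positivity
    linarith
  refine hdec.trans_eq ?_
  rw [Finset.sum_const, Finset.card_range, nsmul_eq_mul, Real.div_rpow h0 (by positivity), dyRatio,
    ← Real.rpow_mul_natCast (by norm_num), ← Real.rpow_natCast 2 k,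
    ← Real.rpow_mul (by norm_num), sub_mul, one_mul, Real.rpow_sub (by norm_num), Nat.cast_pow,
    Nat.cast_ofNat, ← Real.rpow_natCast 2 k, mul_comm (k : ℝ) (2 * γ)]
  ring

/-- The Young bound: the limit of the dyadic sums differs from the single increment `Ξ a b` by the
sum of the geometric series of dyadic corrections. -/
lemma norm_sub_le_of_dySum_tendsto {G : Type*} [NormedAddCommGroup G] {γ a b L : ℝ}
    (hγ : 1 / 2 < γ) (hab : a ≤ b) {Ξ : ℝ → ℝ → G}
    (hΞ : ∀ s ∈ Icc a b, ∀ t ∈ Icc a b, s ≤ t →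
      ‖Ξ s t - (Ξ s ((s + t) / 2) + Ξ ((s + t) / 2) t)‖ ≤ L * (t - s) ^ (2 * γ))
    {I : G} (hI : Tendsto (dySum Ξ a b) atTop (𝓝 I)) :
    ‖Ξ a b - I‖ ≤ (1 - dyRatio γ)⁻¹ * L * (b - a) ^ (2 * γ) := by
  have h := dist_le_of_le_geometric_of_tendsto₀ (dyRatio γ) (L * (b - a) ^ (2 * γ))
    (dyRatio_lt_one hγ) (dySum_dist hab hΞ) hI
  have e : dySum Ξ a b 0 = Ξ a b := by simp [dySum, dyPt]
  rw [e, dist_eq_norm] at h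
  refine h.trans_eq ?_
  rw [div_eq_mul_inv]; ring

/-! ### The Hölder seminorm -/

lemma hSemi_nonneg {F : Type*} [NormedAddCommGroup F] (γ : ℝ) (X : ℝ → F) : 0 ≤ hSemi γ X := by
  refine Real.sSup_nonneg ?_
  rintro r ⟨s, _, t, _, _, rfl⟩
  positivity

lemma norm_sub_le_hSemi {F : Type*} [NormedAddCommGroup F] {γ : ℝ} {X : ℝ → F}
    (hX : HolderOn γ X) {s t : ℝ} (hs : s ∈ Icc (0 : ℝ) 1) (ht : t ∈ Icc (0 : ℝ) 1) :
    ‖X s - X t‖ ≤ hSemi γ X * |s - t| ^ γ := by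
  rcases eq_or_ne s t with rfl | hst
  · have := hSemi_nonneg γ X
    simp only [sub_self, norm_zero]; positivity
  have hpos : ∀ {s t : ℝ}, s ≠ t → 0 < |s - t| ^ γ := fun h =>
    Real.rpow_pos_of_pos (abs_pos.2 (sub_ne_zero.2 h)) _
  obtain ⟨C, hC⟩ := hX
  rw [← div_le_iff₀ (hpos hst)]
  refine le_csSup ⟨C, ?_⟩ ⟨s, hs, t, ht, hst, rfl⟩
  rintro r ⟨s', hs', t', ht', hne, rfl⟩
  rw [div_le_iff₀ (hpos hne)]
  exact hC s' hs' t' ht'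

/-- The product of two `γ`-Hölder increments to and from a midpoint has size `|t - s| ^ (2γ)`. -/
lemma mul_midpoint_le {γ K H s t p q : ℝ} (hγ : 1 / 2 < γ) (hK : 0 ≤ K) (hH : 0 ≤ H)
    (hst : s ≤ t) (hq0 : 0 ≤ q)
    (hp : p ≤ K * |s - (s + t) / 2| ^ γ) (hq : q ≤ H * |t - (s + t) / 2| ^ γ) :
    p * q ≤ K * H * (t - s) ^ (2 * γ) := by
  have h0 : 0 ≤ t - s := sub_nonneg.2 hst
  have e1 : |s - (s + t) / 2| ^ γ ≤ (t - s) ^ γ :=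
    Real.rpow_le_rpow (abs_nonneg _) (abs_le.2 ⟨by linarith, by linarith⟩) (by linarith)
  have e2 : |t - (s + t) / 2| ^ γ ≤ (t - s) ^ γ :=
    Real.rpow_le_rpow (abs_nonneg _) (abs_le.2 ⟨by linarith, by linarith⟩) (by linarith)
  have hp' : p ≤ K * (t - s) ^ γ := hp.trans (by gcongr)
  have hq' : q ≤ H * (t - s) ^ γ := hq.trans (by gcongr)
  calc p * q ≤ (K * (t - s) ^ γ) * (H * (t - s) ^ γ) :=
        mul_le_mul hp' hq' hq0 (by positivity)
    _ = K * H * (t - s) ^ (2 * γ) := by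
        rw [two_mul, Real.rpow_add_of_nonneg h0 (by linarith) (by linarith)]; ring

lemma youngEstimate_dyRatio {γ : ℝ} (hγ : 1 / 2 < γ) : YoungEstimate γ (1 - dyRatio γ)⁻¹ := by
  intro X Y hX hY η hη ξ hξ hηξ I hI
  set Ξ : ℝ → ℝ → M3 := fun s t => oProd (X s - X η) (Y t - Y s) with hΞdef
  have hsub : Icc η ξ ⊆ Icc (0 : ℝ) 1 := Icc_subset_Icc hη.1 hξ.2
  have hΞ : ∀ s ∈ Icc η ξ, ∀ t ∈ Icc η ξ, s ≤ t →
      ‖Ξ s t - (Ξ s ((s + t) / 2) + Ξ ((s + t) / 2) t)‖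
        ≤ (hSemi γ X * hSemi γ Y) * (t - s) ^ (2 * γ) := by
    intro s hs t ht hst
    have hm : (s + t) / 2 ∈ Icc η ξ := ⟨by linarith [hs.1, ht.1], by linarith [hs.2, ht.2]⟩
    have e : Ξ s t - (Ξ s ((s + t) / 2) + Ξ ((s + t) / 2) t)
        = oProd (X s - X ((s + t) / 2)) (Y t - Y ((s + t) / 2)) := by
      ext1 v
      simp only [hΞdef, oProd, sub_apply, add_apply,
        ContinuousLinearMap.smulRight_apply, innerSL_apply_apply, inner_sub_left]
      module
    rw [e, oProd, ContinuousLinearMap.norm_smulRight_apply, innerSL_apply_norm, mul_comm]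
    exact mul_midpoint_le hγ (hSemi_nonneg _ _) (hSemi_nonneg _ _) hst (norm_nonneg _)
      (norm_sub_le_hSemi hX (hsub hs) (hsub hm)) (norm_sub_le_hSemi hY (hsub ht) (hsub hm))
  have h := norm_sub_le_of_dySum_tendsto hγ hηξ hΞ (hI.tendsto_dyPtn hηξ)
  have e0 : Ξ η ξ = 0 := by
    ext1 v
    simp [hΞdef, oProd]
  rw [e0, zero_sub, norm_neg] at h
  exact h.trans_eq (by ring)

/-! ### Dyadic approximations of the velocity field -/

section Velocity

variable {G : Type*} [NormedAddCommGroup G] [NormedSpace ℝ G]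

/-- The `k`-th dyadic approximation `∑ A(x - Y_{t_i}) (Y_{t_{i+1}} - Y_{t_i})` of the velocity field,
for a field `A` of linear maps into an arbitrary space `G`, so that `G` may itself be a space of
derivatives. -/
def dyVel (A : E3 → E3 →L[ℝ] G) (Y : ℝ → E3) (k : ℕ) (x : E3) : G :=
  dySum (fun s t => A (x - Y s) (Y t - Y s)) 0 1 k

/-- The field `A'(y) u = (w ↦ (D A(y) w) u)`, whose velocity field is the derivative of the
velocity field of `A`. -/
def derivField (A : E3 → E3 →L[ℝ] G) (y : E3) : E3 →L[ℝ] E3 →L[ℝ] G := (fderiv ℝ A y).flip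

lemma dyVel_increment {A : E3 → E3 →L[ℝ] G} {Y : ℝ → E3} {γ H K : ℝ} {x : E3} (hγ : 1 / 2 < γ)
    (hH : 0 ≤ H) (hK : 0 ≤ K)
    (hY : ∀ s ∈ Icc (0 : ℝ) 1, ∀ t ∈ Icc (0 : ℝ) 1, ‖Y s - Y t‖ ≤ H * |s - t| ^ γ)
    (hA : ∀ s ∈ Icc (0 : ℝ) 1, ∀ t ∈ Icc (0 : ℝ) 1,
      ‖A (x - Y s) - A (x - Y t)‖ ≤ K * ‖Y s - Y t‖) :
    ∀ s ∈ Icc (0 : ℝ) 1, ∀ t ∈ Icc (0 : ℝ) 1, s ≤ t →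
      ‖A (x - Y s) (Y t - Y s) - (A (x - Y s) (Y ((s + t) / 2) - Y s)
        + A (x - Y ((s + t) / 2)) (Y t - Y ((s + t) / 2)))‖ ≤ (K * H * H) * (t - s) ^ (2 * γ) := by
  intro s hs t ht hst
  have hm : (s + t) / 2 ∈ Icc (0 : ℝ) 1 := ⟨by linarith [hs.1, ht.1], by linarith [hs.2, ht.2]⟩
  have e : A (x - Y s) (Y t - Y s) - (A (x - Y s) (Y ((s + t) / 2) - Y s)
        + A (x - Y ((s + t) / 2)) (Y t - Y ((s + t) / 2)))
      = (A (x - Y s) - A (x - Y ((s + t) / 2))) (Y t - Y ((s + t) / 2)) := by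
    simp only [sub_apply, map_sub]; abel
  rw [e]
  refine (ContinuousLinearMap.le_opNorm _ _).trans ?_
  refine mul_midpoint_le hγ (by positivity) hH hst (norm_nonneg _) ?_ (hY t ht _ hm)
  refine (hA s hs _ hm).trans ?_
  rw [mul_assoc]
  exact mul_le_mul_of_nonneg_left (hY s hs _ hm) hK

/-- For a `C¹` field, the dyadic approximations converge uniformly on balls: there `A` is Lipschitz
along the translated curves, so the corrections are bounded by one geometric series. -/
lemma exists_dyVel_limit [CompleteSpace G] {A : E3 → E3 →L[ℝ] G} (hA : ContDiff ℝ 1 A)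
    {Y : ℝ → E3} {γ H : ℝ} (hγ : 1 / 2 < γ) (hH : 0 ≤ H)
    (hY : ∀ s ∈ Icc (0 : ℝ) 1, ∀ t ∈ Icc (0 : ℝ) 1, ‖Y s - Y t‖ ≤ H * |s - t| ^ γ) :
    ∃ g : E3 → G, ∀ R : ℝ, TendstoUniformlyOn (dyVel A Y) g atTop (Metric.ball 0 R) := by
  have key : ∀ R : ℝ, ∃ L : ℝ, ∀ x ∈ Metric.ball (0 : E3) R, ∀ k,
      dist (dyVel A Y k x) (dyVel A Y (k + 1) x) ≤ L * dyRatio γ ^ k := by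
    intro R
    set B : Set E3 := Metric.closedBall 0 (R + (‖Y 0‖ + H)) with hB
    obtain ⟨K, hK⟩ := (isCompact_closedBall (0 : E3) (R + (‖Y 0‖ + H))).exists_bound_of_continuousOn
      (f := fderiv ℝ A) (hA.continuous_fderiv one_ne_zero).continuousOn
    refine ⟨max K 0 * H * H * (1 - 0) ^ (2 * γ), fun x hx k => ?_⟩
    have hmem : ∀ s ∈ Icc (0 : ℝ) 1, x - Y s ∈ B := by
      intro s hs
      have h1 := hY s hs 0 ⟨le_rfl, zero_le_one⟩
      have h2 : |s - 0| ^ γ ≤ 1 := by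
        rw [sub_zero, abs_of_nonneg hs.1]
        exact Real.rpow_le_one hs.1 hs.2 (by linarith)
      have h3 : ‖Y s‖ ≤ ‖Y 0‖ + ‖Y s - Y 0‖ := by
        simpa using norm_add_le (Y 0) (Y s - Y 0)
      have h4 : ‖x‖ < R := by simpa using hx
      have h5 : H * |s - 0| ^ γ ≤ H := mul_le_of_le_one_right hH h2
      rw [hB, mem_closedBall_zero_iff]
      linarith [norm_sub_le x (Y s)]
    refine dySum_dist zero_le_one (dyVel_increment hγ hH (le_max_right K 0) hY ?_) k
    intro s hs t ht
    have := (convex_closedBall (0 : E3) (R + (‖Y 0‖ + H))).norm_image_sub_le_of_norm_fderiv_le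
      (f := A) (fun y _ => (hA.differentiable one_ne_zero) y)
      (fun y hy => (hK y hy).trans (le_max_left K 0)) (hmem t ht) (hmem s hs)
    rwa [sub_sub_sub_cancel_left, norm_sub_rev (Y t)] at this
  have hlim : ∀ x : E3, ∃ l, Tendsto (fun k => dyVel A Y k x) atTop (𝓝 l) := by
    intro x
    obtain ⟨L, hL⟩ := key (‖x‖ + 1)
    exact cauchySeq_tendsto_of_complete
      (cauchySeq_of_le_geometric _ L (dyRatio_lt_one hγ) (hL x (by simp)))
  choose g hg using hlim
  refine ⟨g, fun R => ?_⟩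
  obtain ⟨L, hL⟩ := key R
  rw [Metric.tendstoUniformlyOn_iff]
  intro ε hε
  have h0 : Tendsto (fun k : ℕ => L * dyRatio γ ^ k / (1 - dyRatio γ)) atTop (𝓝 0) := by
    have := ((tendsto_pow_atTop_nhds_zero_of_lt_one (dyRatio_pos γ).le
      (dyRatio_lt_one hγ)).const_mul L).div_const (1 - dyRatio γ)
    simpa using this
  filter_upwards [h0.eventually (gt_mem_nhds hε)] with k hk x hx
  rw [dist_comm]
  exact (dist_le_of_le_geometric_of_tendsto _ L (dyRatio_lt_one hγ) (hL x hx) (hg x) k).trans_lt hk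

lemma hasFDerivAt_dyVel {A : E3 → E3 →L[ℝ] G} (hA : Differentiable ℝ A) (Y : ℝ → E3) (k : ℕ)
    (x : E3) : HasFDerivAt (dyVel A Y k) (dyVel (derivField A) Y k x) x := by
  unfold dyVel dySum
  refine HasFDerivAt.fun_sum fun i _ => ?_
  have h1 : HasFDerivAt (fun x => A (x - Y (dyPt 0 1 k i)))
      (fderiv ℝ A (x - Y (dyPt 0 1 k i))) x := by
    have := (hA (x - Y (dyPt 0 1 k i))).hasFDerivAt.comp x
      ((hasFDerivAt_id x).sub_const (Y (dyPt 0 1 k i)))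
    rwa [ContinuousLinearMap.comp_id] at this
  have h2 := h1.clm_apply (hasFDerivAt_const (Y (dyPt 0 1 k (i + 1)) - Y (dyPt 0 1 k i)) x)
  refine h2.congr_fderiv ?_
  ext w
  simp [derivField]

/-- Exchanging the two arguments of a bilinear map, as a linear isometry. -/
def flipIso (G : Type*) [NormedAddCommGroup G] [NormedSpace ℝ G] :
    (E3 →L[ℝ] E3 →L[ℝ] G) ≃ₗᵢ[ℝ] (E3 →L[ℝ] E3 →L[ℝ] G) :=
  ContinuousLinearMap.flipₗᵢ ℝ E3 E3 G

lemma derivField_eq_comp (A : E3 → E3 →L[ℝ] G) : derivField A = flipIso G ∘ fderiv ℝ A := rfl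

lemma norm_iteratedFDeriv_of_eq_isometry {F F' : Type*} [NormedAddCommGroup F] [NormedSpace ℝ F]
    [NormedAddCommGroup F'] [NormedSpace ℝ F'] (g : F ≃ₗᵢ[ℝ] F') {f : E3 → F} {h : E3 → F'}
    (hh : h = g ∘ f) (n : ℕ) (x : E3) :
    ‖iteratedFDeriv ℝ n h x‖ = ‖iteratedFDeriv ℝ n f x‖ := by
  subst hh
  exact g.norm_iteratedFDeriv_comp_left f x n

lemma norm_iteratedFDeriv_derivField (A : E3 → E3 →L[ℝ] G) (n : ℕ) (x : E3) :
    ‖iteratedFDeriv ℝ n (derivField A) x‖ = ‖iteratedFDeriv ℝ (n + 1) A x‖ := by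
  refine Eq.trans ?_ (norm_iteratedFDeriv_fderiv (𝕜 := ℝ) (f := A) (x := x) (n := n))
  -- The spaces are named so that the norm instances are found before `flipIso` is unified.
  refine norm_iteratedFDeriv_of_eq_isometry (F := E3 →L[ℝ] E3 →L[ℝ] G)
    (F' := E3 →L[ℝ] E3 →L[ℝ] G) ?_ ?_ n x
  · exact flipIso G
  · exact derivField_eq_comp A

lemma contDiff_derivField {A : E3 → E3 →L[ℝ] G} {n : ℕ} (hA : ContDiff ℝ (n + 1 + 1) A) :
    ContDiff ℝ (n + 1) (derivField A) := by
  rw [derivField_eq_comp]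
  exact (LinearIsometryEquiv.contDiff (E := E3 →L[ℝ] E3 →L[ℝ] G)
    (F := E3 →L[ℝ] E3 →L[ℝ] G) (flipIso G)).comp (hA.fderiv_right le_rfl)

end Velocity

/-- Regularity and the bound for the velocity field, by induction on `n`. For `n = 0` the bound is
the Young bound, since `A(x - Y_0)(Y_1 - Y_0) = 0` for a closed curve. In the induction step, the
derivative of the velocity field of `A` is the velocity field of `derivField A`. -/
lemma velocity_regular {Y : ℝ → E3} {γ H M : ℝ} (hγ : 1 / 2 < γ) (hH : 0 ≤ H)
    (hY : ∀ s ∈ Icc (0 : ℝ) 1, ∀ t ∈ Icc (0 : ℝ) 1, ‖Y s - Y t‖ ≤ H * |s - t| ^ γ)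
    (hclosed : Y 0 = Y 1) (n : ℕ) :
    ∀ {G : Type} [NormedAddCommGroup G] [NormedSpace ℝ G] [CompleteSpace G]
      (A : E3 → E3 →L[ℝ] G), ContDiff ℝ (n + 1) A →
      (∀ x, ‖iteratedFDeriv ℝ (n + 1) A x‖ ≤ M) →
      ∀ V : E3 → G, (∀ x, Tendsto (fun k => dyVel A Y k x) atTop (𝓝 (V x))) →
        ContDiff ℝ n V ∧
          ∀ x, ‖iteratedFDeriv ℝ n V x‖ ≤ (1 - dyRatio γ)⁻¹ * M * H ^ 2 := by
  induction n with
  | zero =>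
    intro G _ _ _ A hA hM V hV
    have hA1 : ContDiff ℝ 1 A := by simpa using hA
    have hdiff : Differentiable ℝ A := hA1.differentiable one_ne_zero
    obtain ⟨g, hg⟩ := exists_dyVel_limit hA1 hγ hH hY
    have hgV : g = V := funext fun x => tendsto_nhds_unique
      ((hg (‖x‖ + 1)).tendsto_at (by simp)) (hV x)
    subst hgV
    constructor
    · rw [Nat.cast_zero, contDiff_zero, continuous_iff_continuousAt]
      intro x
      refine ((hg (‖x‖ + 1)).continuousOn (Eventually.frequently (Eventually.of_forall fun k =>
        Continuous.continuousOn ?_))).continuousAt (Metric.isOpen_ball.mem_nhds (by simp))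
      exact continuous_iff_continuousAt.2 fun y => (hasFDerivAt_dyVel hdiff Y k y).continuousAt
    · intro x
      rw [norm_iteratedFDeriv_zero]
      have hM0 : 0 ≤ M := (norm_nonneg _).trans (hM 0)
      have hlip : ∀ s ∈ Icc (0 : ℝ) 1, ∀ t ∈ Icc (0 : ℝ) 1,
          ‖A (x - Y s) - A (x - Y t)‖ ≤ M * ‖Y s - Y t‖ := by
        intro s _ t _
        have := convex_univ.norm_image_sub_le_of_norm_fderiv_le (f := A) (C := M)
          (fun y _ => hdiff y) (fun y _ => by
            have := hM y
            rwa [zero_add, norm_iteratedFDeriv_one] at this)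
          (mem_univ (x - Y t)) (mem_univ (x - Y s))
        rwa [sub_sub_sub_cancel_left, norm_sub_rev (Y t)] at this
      have h := norm_sub_le_of_dySum_tendsto hγ zero_le_one
        (dyVel_increment hγ hH hM0 hY hlip) (hV x)
      rw [hclosed, sub_self, map_zero, zero_sub, norm_neg, sub_zero, Real.one_rpow] at h
      exact h.trans_eq (by ring)
  | succ n ih =>
    intro G _ _ _ A hA hM V hV
    have hA2 : ContDiff ℝ (n + 1 + 1) A := by exact_mod_cast hA
    have hA' : ContDiff ℝ (n + 1) (derivField A) := contDiff_derivField hA2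
    have hdiff : Differentiable ℝ A := hA2.differentiable (by simp)
    obtain ⟨g, hg⟩ := exists_dyVel_limit (hA'.of_le (by simp)) hγ hH hY
    have hVg : ∀ x, HasFDerivAt V (g x) x := fun x =>
      hasFDerivAt_of_tendstoUniformlyOn Metric.isOpen_ball (hg (‖x‖ + 1))
        (fun k y _ => hasFDerivAt_dyVel hdiff Y k y) (fun y _ => hV y) (by simp)
    have hfd : fderiv ℝ V = g := funext fun x => (hVg x).fderiv
    obtain ⟨h1, h2⟩ := ih (derivField A) hA'
      (fun x => by rw [norm_iteratedFDeriv_derivField]; exact hM x) g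
      (fun x => (hg (‖x‖ + 1)).tendsto_at (by simp))
    constructor
    · rw [Nat.cast_succ, contDiff_succ_iff_fderiv]
      refine ⟨fun x => (hVg x).differentiableAt, by simp, ?_⟩
      rw [hfd]
      exact h1
    · intro x
      rw [← norm_iteratedFDeriv_fderiv, hfd]
      exact h2 x

/-- For `1/2 < γ ≤ 1` there is a constant `C_γ ≥ 1` depending only on `γ`
(realizing the Young integral estimate) such that for every matrix field `A` with
`‖∇^{n+1} A‖ < ∞` and every closed `γ`-Hölder curve `Y ∈ 𝒞^γ`, the Young velocity field
`V^Y(x) = ∫_0^1 A(x - Y_η) dY_η` satisfies `‖∇^n V^Y‖ ≤ C_γ ‖∇^{n+1} A‖ ‖Y‖_γ²`. -/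
theorem statement_3 (γ : ℝ) (hγ : 1 / 2 < γ) (hγ1 : γ ≤ 1) :
    ∃ C : ℝ, 1 ≤ C ∧ YoungEstimate γ C ∧
      ∀ (A : E3 → M3) (n : ℕ),
        ContDiff ℝ (n + 1) A →
        BddAbove (Set.range fun x => ‖iteratedFDeriv ℝ (n + 1) A x‖) →
        ∀ Y : ℝ → E3, MemC γ Y →
        ∀ V : E3 → E3, IsYoungVelocity A Y V →
          ContDiff ℝ n V ∧
            ∀ x : E3, ‖iteratedFDeriv ℝ n V x‖ ≤ C * tnorm (n + 1) A * hSemi γ Y ^ 2 := by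
  have hr0 := dyRatio_pos γ
  have hr1 := dyRatio_lt_one hγ
  refine ⟨(1 - dyRatio γ)⁻¹, (one_le_inv₀ (by linarith)).2 (by linarith),
    youngEstimate_dyRatio hγ, ?_⟩
  intro A n hA hbdd Y hY V hV
  exact velocity_regular hγ (hSemi_nonneg γ Y)
    (fun s hs t ht => norm_sub_le_hSemi hY.2 hs ht) hY.1.2 n A hA
    (fun x => le_csSup hbdd ⟨x, rfl⟩) V (fun x => (hV x).tendsto_dyPtn zero_le_one)

end
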